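/- arXiv:1407.0226 — 6 statements merged into one kernel-verified Lean document; each statement's English description precedes it below -/
import Mathlib

section
/- Let k be a field of characteristic zero, let V be a finite-dimensional k-vector space, and let T_1, ..., T_m be finitely many linear subspaces of End(V). Then there exists a vector v ∈ V such that for every i = 1, ..., m, the dimension of the subspace T_i·v equals the maximum over all w ∈ V of the dimension of T_i·w (i.e., v is simultaneously a rank-vector for all the subspaces T_1, ..., T_m). -/
open Module

/-!
The inequality `dim (T · v) ≥ n` is an open condition on `v`: it is witnessed by `n` elements of
`T` whose values at `v` are linearly independent, that is, by a nonvanishing minor. Along a line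
such a minor is a polynomial in the parameter, so a line through one rank-vector of `T` consists
of rank-vectors up to finitely many exceptions. Given a common rank-vector of several subspaces
and a rank-vector of one more, some point of the line joining them therefore works for all.
-/

open Filter Polynomial

theorem eventually_cofinite_det_add_smul_ne_zero {R n : Type*} [CommRing R] [IsDomain R] [Fintype n]
    [DecidableEq n] {A B : Matrix n n R} {t₀ : R} (h : (A + t₀ • B).det ≠ 0) :
    ∀ᶠ t : R in cofinite, (A + t • B).det ≠ 0 := by
  let p : R[X] := (A.map C + (X : R[X]) • B.map C : Matrix n n R[X]).det
  have eval_p (t : R) : p.eval t = (A + t • B).det := by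
    rw [← coe_evalRingHom, RingHom.map_det]
    congr 1
    ext i j
    simp [mul_comm (B i j) t]
  have p_ne_zero : p ≠ 0 := fun hp => h (by rw [← eval_p, hp, eval_zero])
  simpa only [IsRoot.def, eval_p, eventually_cofinite, not_not] using
    finite_setOfPred_isRoot p_ne_zero

theorem eventually_cofinite_linearIndependent_add_smul {K W ι : Type*} [Field K] [AddCommGroup W]
    [Module K W] [Finite ι] {x y : ι → W} {t₀ : K} (h : LinearIndependent K (x + t₀ • y)) :
    ∀ᶠ t : K in cofinite, LinearIndependent K (x + t • y) := by
  classical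
  have := Fintype.ofFinite ι
  obtain ⟨f, hf⟩ := LinearMap.exists_leftInverse_of_injective
    (Fintype.linearCombination K (x + t₀ • y))
    (LinearMap.ker_eq_bot.2 h.fintypeLinearCombination_injective)
  let A : Matrix ι ι K := .of (f ∘ x)
  let B : Matrix ι ι K := .of (f ∘ y)
  have rows (t : K) : (A + t • B).row = f ∘ (x + t • y) := by
    ext i j
    simp [A, B]
  have eq_one : A + t₀ • B = 1 := by
    ext i j
    have f_apply : f ((x + t₀ • y) i) = Pi.single i 1 := by
      simpa using LinearMap.congr_fun hf (Pi.single i 1)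
    rw [← Matrix.row_apply (A + t₀ • B), rows, Function.comp_apply, f_apply,
      Matrix.one_eq_pi_single]
  have det_ne_zero : (A + t₀ • B).det ≠ 0 := by
    rw [eq_one, Matrix.det_one]
    exact one_ne_zero
  filter_upwards [eventually_cofinite_det_add_smul_ne_zero det_ne_zero] with t ht
  exact .of_comp f (rows t ▸ Matrix.linearIndependent_rows_of_det_ne_zero ht)

theorem le_finrank_map_iff_exists_linearIndependent {R M N : Type*} [Ring R] [StrongRankCondition R]
    [AddCommGroup M] [Module R M] [AddCommGroup N] [Module R N] (f : M →ₗ[R] N)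
    (p : Submodule R M) [Module.Finite R (p.map f)] {n : ℕ} :
    n ≤ finrank R (p.map f) ↔
      ∃ x : Fin n → M, (∀ i, x i ∈ p) ∧ LinearIndependent R (f ∘ x) := by
  constructor
  · intro h
    obtain ⟨y, hy⟩ := exists_linearIndependent_of_le_finrank h
    choose x hxp hxy using fun i => (y i).2
    refine ⟨x, hxp, ?_⟩
    rw [show f ∘ x = (p.map f).subtype ∘ y from funext hxy]
    exact hy.map' _ (Submodule.ker_subtype _)
  · rintro ⟨x, hxp, hx⟩
    let y (i : Fin n) : p.map f := ⟨f (x i), Submodule.mem_map_of_mem (hxp i)⟩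
    have hy : LinearIndependent R y := .of_comp (p.map f).subtype hx
    simpa using hy.fintype_card_le_finrank

section RankVector

variable {K V W : Type*} [Field K] [AddCommGroup V] [Module K V] [AddCommGroup W] [Module K W]

/-- A rank-vector of a space `T` of linear maps: a vector `v` at which the dimension of
`T · v = {S v | S ∈ T}` is maximal. The subspace `T · v` is encoded as the image of `T` under
evaluation at `v`. Since `finrank` vanishes on infinite-dimensional spaces, the notion is meant for
a finite-dimensional codomain `W`. -/
def IsRankVector (T : Submodule K (V →ₗ[K] W)) (v : V) : Prop :=
  ∀ w : V, finrank K (T.map (LinearMap.applyₗ w)) ≤ finrank K (T.map (LinearMap.applyₗ v))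

variable [FiniteDimensional K W]

theorem exists_isRankVector (T : Submodule K (V →ₗ[K] W)) : ∃ v, IsRankVector T v := by
  let r (v : V) : ℕ := finrank K (T.map (LinearMap.applyₗ v))
  have bddAbove : BddAbove (Set.range r) :=
    ⟨finrank K W, Set.forall_mem_range.2 fun _ => Submodule.finrank_le _⟩
  obtain ⟨v, hv⟩ := Nat.sSup_mem (Set.range_nonempty r) bddAbove
  exact ⟨v, fun w => (le_csSup bddAbove ⟨w, rfl⟩).trans_eq hv.symm⟩

theorem eventually_cofinite_finrank_map_applyₗ_le (T : Submodule K (V →ₗ[K] W)) (v u : V) (t₀ : K) :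
    ∀ᶠ t : K in cofinite, finrank K (T.map (LinearMap.applyₗ (v + t₀ • u))) ≤
      finrank K (T.map (LinearMap.applyₗ (v + t • u))) := by
  obtain ⟨S, hST, hS⟩ := (le_finrank_map_iff_exists_linearIndependent _ T).1
    (le_refl (finrank K (T.map (LinearMap.applyₗ (v + t₀ • u)))))
  have values (t : K) : LinearMap.applyₗ (v + t • u) ∘ S = (S · v) + t • (S · u) := by
    ext j
    simp
  rw [values] at hS
  filter_upwards [eventually_cofinite_linearIndependent_add_smul hS] with t ht
  exact (le_finrank_map_iff_exists_linearIndependent _ T).2 ⟨S, hST, (values t).symm ▸ ht⟩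

theorem IsRankVector.eventually_cofinite {T : Submodule K (V →ₗ[K] W)} {v u : V} {t₀ : K}
    (h : IsRankVector T (v + t₀ • u)) : ∀ᶠ t : K in cofinite, IsRankVector T (v + t • u) := by
  filter_upwards [eventually_cofinite_finrank_map_applyₗ_le T v u t₀] with t ht
  exact fun w => (h w).trans ht

theorem exists_simultaneous_rank_vector_general [Infinite K] {ι : Type*} [Finite ι]
    (T : ι → Submodule K (V →ₗ[K] W)) : ∃ v, ∀ i, IsRankVector (T i) v := by
  classical
  have := Fintype.ofFinite ι
  suffices ∀ s : Finset ι, ∃ v, ∀ i ∈ s, IsRankVector (T i) v by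
    simpa using this Finset.univ
  intro s
  induction s using Finset.induction_on with
  | empty => simp
  | insert i s _ ih =>
    obtain ⟨v, hv⟩ := ih
    obtain ⟨w, hw⟩ := exists_isRankVector (T i)
    have old : ∀ᶠ t : K in cofinite, ∀ j ∈ s, IsRankVector (T j) (v + t • (w - v)) :=
      (eventually_all_finset s).2 fun j hj =>
        IsRankVector.eventually_cofinite (t₀ := 0) (by simpa using hv j hj)
    have new : ∀ᶠ t : K in cofinite, IsRankVector (T i) (v + t • (w - v)) :=
      IsRankVector.eventually_cofinite (t₀ := 1) (by simpa using hw)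
    obtain ⟨t, ht_new, ht_old⟩ := (new.and old).exists
    exact ⟨v + t • (w - v), (Finset.forall_mem_insert ..).2 ⟨ht_new, ht_old⟩⟩

end RankVector

/-- **Simultaneous rank-vectors.** Let `K` be a field of characteristic zero, `V` a
finite-dimensional `K`-vector space and `T 1, …, T m` finitely many linear subspaces of
`End(V)`.  Then there is a vector `v ∈ V` which is simultaneously a rank-vector for all of
them, i.e. for every `i` the dimension of `T i · v` is the maximum over `w ∈ V` of the
dimension of `T i · w`. -/
theorem exists_simultaneous_rank_vector
    (K : Type) [Field K] [CharZero K]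
    (V : Type) [AddCommGroup V] [Module K V] [FiniteDimensional K V]
    (m : ℕ) (T : Fin m → Submodule K (Module.End K V)) :
    ∃ v : V, ∀ i : Fin m, ∀ w : V,
      finrank K ((T i).map (LinearMap.applyₗ w)) ≤
        finrank K ((T i).map (LinearMap.applyₗ v)) :=
  exists_simultaneous_rank_vector_general T
end

section
/- Let k be a field of characteristic zero, let V be a finite-dimensional k-vector space, and let T_p ⊆ T_{p-1} ⊆ ⋯ ⊆ T_1 be a chain of linear subspaces of End(V) with T_p ≠ 0. Then there exist integers s_1 ≥ s_2 ≥ ⋯ ≥ s_p ≥ 1, a linearly independent family of vectors v_1, ..., v_{s_1} in V, and linear subspaces T_{k,j} ⊆ End(V) for 1 ≤ k ≤ p and 1 ≤ j ≤ s_k, such that: (1) for each k, T_k is the internal direct sum T_{k,1} ⊕ T_{k,2} ⊕ ⋯ ⊕ T_{k,s_k}, and T_{k+1,j} ⊆ T_{k,j} whenever 1 ≤ k ≤ p−1 and 1 ≤ j ≤ s_{k+1}; (2) dim T_{k,j} = dim (T_{k,j}·v_j) for all 1 ≤ j ≤ s_k and 1 ≤ k ≤ p; (3) T_{k,j}·v_i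 = 0 for all 1 ≤ i < j ≤ s_k and 1 ≤ k ≤ p; (4) T(v) ∈ T_{k,i}·v_i for every T ∈ T_{k,j}, every v ∈ V, and all 1 ≤ i < j ≤ s_k, 1 ≤ k ≤ p. -/
/-!
A vector `v` maximizing `∑ m, dim (T m · v)` is generic for every `T m` at once: if `f ∈ T m` kills
`v` but `f x ∉ T m · v`, then over an infinite field `dim (T m · (v + c • x)) > dim (T m · v)` for
all but finitely many `c`, while none of the other dimensions drops. Choose complements `W m` of
`{f ∈ T m | f v = 0}` in `T m`, decreasing with `m`; evaluation at `v` is injective on `W m`, and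
genericity says that every `f ∈ T m` killing `v` takes its values in `W m · v`. Repeating this with
the subspaces `{f ∈ T m | f v = 0}` exhausts the chain. Evaluations at the successive vectors are
triangular with respect to the summands, which gives both independence statements.
-/

open Module

section Lattice

variable {α : Type*} [Lattice α] [BoundedOrder α] [IsModularLattice α] [ComplementedLattice α]

theorem exists_le_disjoint_sup_inf_eq {a b c : α} (hab : a ≤ b) (hac : Disjoint a c) :
    ∃ a', a ≤ a' ∧ Disjoint a' c ∧ a' ⊔ (b ⊓ c) = b := by
  obtain ⟨d, had, hd⟩ := (hac.mono_right (inf_le_right : b ⊓ c ≤ c)).exists_isCompl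
  refine ⟨d ⊓ b, le_inf had hab, ?_, ?_⟩
  · rw [disjoint_iff, inf_assoc, hd.inf_eq_bot]
  · rw [sup_comm, ← sup_inf_assoc_of_le d inf_le_left, sup_comm, hd.sup_eq_top, top_inf_eq]

-- The induction builds `a'` from its last, smallest term upwards; `a` is the term built before.
theorem exists_antitone_disjoint_sup_inf_eq {p : ℕ} {b : Fin p → α} (hb : Antitone b) {a c : α}
    (hab : ∀ m, a ≤ b m) (hac : Disjoint a c) :
    ∃ a' : Fin p → α, Antitone a' ∧ (∀ m, a ≤ a' m) ∧
      ∀ m, Disjoint (a' m) c ∧ a' m ⊔ (b m ⊓ c) = b m := by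
  induction p generalizing a with
  | zero => exact ⟨Fin.elim0, fun i ↦ i.elim0, fun i ↦ i.elim0, fun i ↦ i.elim0⟩
  | succ p ih =>
    obtain ⟨z, haz, hzc, hzb⟩ := exists_le_disjoint_sup_inf_eq (hab (Fin.last p)) hac
    have hz_le (m : Fin p) : z ≤ b m.castSucc :=
      (le_sup_left.trans_eq hzb).trans (hb (Fin.le_last _))
    obtain ⟨a', ha', hza', h⟩ := ih (hb.comp_monotone Fin.strictMono_castSucc.monotone) hz_le hzc
    refine ⟨Fin.snoc a' z, fun i j hij ↦ ?_, fun m ↦ ?_, fun m ↦ ?_⟩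
    · induction j using Fin.lastCases with
      | last => induction i using Fin.lastCases with
        | last => exact le_rfl
        | cast i => simpa using hza' i
      | cast j => induction i using Fin.lastCases with
        | last => exact absurd hij (Fin.castSucc_lt_last j).not_ge
        | cast i => simpa using ha' (Fin.castSucc_le_castSucc_iff.1 hij)
    · induction m using Fin.lastCases with
      | last => simpa using haz
      | cast m => simpa using haz.trans (hza' m)
    · induction m using Fin.lastCases with
      | last => simpa using ⟨hzc, hzb⟩
      | cast m => simpa using h m

end Lattice

section Triangular

variable {ι R M N : Type*} [LinearOrder ι] [Ring R] [AddCommGroup M] [Module R M]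
  [AddCommGroup N] [Module R N]

theorem iSupIndep_of_triangular {W : ι → Submodule R M} (e : ι → M →ₗ[R] N)
    (hdisj : ∀ i, Disjoint (W i) (LinearMap.ker (e i)))
    (hker : ∀ i j, i < j → W j ≤ LinearMap.ker (e i)) : iSupIndep W := by
  classical
  rw [iSupIndep_iff_finsetSum_eq_zero_imp_eq_zero]
  intro t w hw hsum
  by_contra! hne
  have hu : {i ∈ t | w i ≠ 0}.Nonempty := by simpa [Finset.Nonempty] using hne
  let i := Finset.min' _ hu
  obtain ⟨hit, hwi⟩ := Finset.mem_filter.1 (Finset.min'_mem _ hu)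
  have hei : e i (∑ k ∈ t, w k) = e i (w i) := by
    rw [map_sum, Finset.sum_eq_single_of_mem i hit]
    intro k hkt hki
    by_cases hwk : w k = 0
    · rw [hwk, map_zero]
    · have hik : i ≤ k := Finset.min'_le _ k (Finset.mem_filter.2 ⟨hkt, hwk⟩)
      exact hker i k (hik.lt_of_ne' hki) (hw k hkt)
  refine hwi (LinearMap.disjoint_ker.1 (hdisj i) _ (hw i hit) ?_)
  rw [← hei, hsum, map_zero]

end Triangular

theorem linearIndependent_of_triangular {ι K V U : Type*} [LinearOrder ι] [DivisionRing K]
    [AddCommGroup V] [Module K V] [AddCommGroup U] [Module K U] {v : ι → V} (f : ι → V →ₗ[K] U)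
    (hne : ∀ i, f i (v i) ≠ 0) (hzero : ∀ i j, i < j → f j (v i) = 0) :
    LinearIndependent K v := by
  have hind : iSupIndep fun i : ιᵒᵈ ↦ K ∙ v (OrderDual.ofDual i) :=
    iSupIndep_of_triangular (fun i ↦ f (OrderDual.ofDual i))
      (fun i ↦ (Submodule.disjoint_span_singleton_of_notMem (hne _)).symm)
      (fun i j hij ↦ (Submodule.span_singleton_le_iff_mem _ _).2 (hzero _ _ hij))
  exact iSupIndep.linearIndependent (fun i : ι ↦ K ∙ v i) hind
    (fun i ↦ Submodule.mem_span_singleton_self _) fun i h ↦ hne i (by rw [h, map_zero])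

section Field

variable {K V U : Type*} [Field K] [AddCommGroup V] [Module K V] [AddCommGroup U] [Module K U]

theorem eventually_injective_add_smul [FiniteDimensional K V] {A : V →ₗ[K] U}
    (hA : Function.Injective A) (B : V →ₗ[K] U) :
    ∀ᶠ c : K in Filter.cofinite, Function.Injective (A + c • B) := by
  obtain ⟨φ, hφ⟩ := A.exists_leftInverse_of_injective (LinearMap.ker_eq_bot.2 hA)
  have hfin : {c : K | End.HasEigenvalue (φ ∘ₗ B) (-c⁻¹)}.Finite :=
    (End.finite_hasEigenvalue (φ ∘ₗ B)).preimage (neg_injective.comp inv_injective).injOn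
  filter_upwards [hfin.compl_mem_cofinite, Filter.eventually_cofinite_ne 0] with c hc hc0
  refine (injective_iff_map_eq_zero _).2 fun x hx ↦ by_contra fun hx0 ↦ hc ?_
  have hφx : x + c • φ (B x) = 0 := by
    simpa [← LinearMap.comp_apply φ A, hφ] using congrArg φ hx
  refine End.hasEigenvalue_of_hasEigenvector ⟨End.mem_eigenspace_iff.2 ?_, hx0⟩
  rw [LinearMap.comp_apply, neg_smul, eq_neg_iff_add_eq_zero, ← smul_right_inj hc0, smul_add,
    smul_inv_smul₀ hc0, smul_zero, add_comm, hφx]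

/-- The subspace `S · v = {f v | f ∈ S}` of values at `v`. -/
abbrev evalImage (S : Submodule K (V →ₗ[K] U)) (v : V) : Submodule K U :=
  S.map (LinearMap.applyₗ v)

/-- The subspace of the maps in `S` which kill `v`. -/
abbrev vanishingAt (S : Submodule K (V →ₗ[K] U)) (v : V) : Submodule K (V →ₗ[K] U) :=
  S ⊓ LinearMap.ker (LinearMap.applyₗ v)

theorem finrank_evalImage_eq_of_disjoint {S : Submodule K (V →ₗ[K] U)} {v : V}
    (h : Disjoint S (LinearMap.ker (LinearMap.applyₗ v))) :
    finrank K (evalImage S v) = finrank K S := by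
  rw [evalImage, ← LinearMap.range_domRestrict]
  exact LinearMap.finrank_range_of_inj
    (LinearMap.injective_domRestrict_iff.2 (by simpa [disjoint_iff, inf_comm] using h))

/-- A vector `v` is generic for `S` if every `f ∈ S` with `f v = 0` maps all of `V` into `S · v`:
to first order, no perturbation of `v` enlarges `S · v`. -/
def IsGeneric (S : Submodule K (V →ₗ[K] U)) (v : V) : Prop :=
  ∀ x, evalImage (vanishingAt S v) x ≤ evalImage S v

theorem eventually_finrank_evalImage_sup_le (S : Submodule K (V →ₗ[K] U)) [FiniteDimensional K S]
    (v x : V) :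
    ∀ᶠ c : K in Filter.cofinite,
      finrank K (evalImage S v ⊔ evalImage (vanishingAt S v) x : Submodule K U) ≤
        finrank K (evalImage S (v + c • x)) := by
  let N := vanishingAt S v
  let q : S × N →ₗ[K] U :=
    ((LinearMap.applyₗ v).domRestrict S).coprod ((LinearMap.applyₗ x).domRestrict N)
  have hq : LinearMap.range q = evalImage S v ⊔ evalImage N x := by
    rw [LinearMap.range_coprod, LinearMap.range_domRestrict, LinearMap.range_domRestrict]
  obtain ⟨σ, hσ⟩ := q.rangeRestrict.exists_rightInverse_of_surjective q.range_rangeRestrict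
  have hσ_apply (y : LinearMap.range q) : (σ y).1.1 v + (σ y).2.1 x = y :=
    congrArg Subtype.val (LinearMap.congr_fun hσ y)
  let B : LinearMap.range q →ₗ[K] U :=
    (LinearMap.applyₗ x).domRestrict S ∘ₗ LinearMap.fst K S N ∘ₗ σ
  filter_upwards [eventually_injective_add_smul (LinearMap.range q).subtype_injective B,
    Filter.eventually_cofinite_ne 0] with c hinj hc
  rw [← hq, ← LinearMap.finrank_range_of_inj hinj]
  refine Submodule.finrank_mono ?_
  rintro _ ⟨y, rfl⟩
  -- If `y = f v + g x` with `g v = 0`, then `y + c • f x = (f + c⁻¹ • g) (v + c • x)`.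
  refine ⟨(σ y).1.1 + c⁻¹ • (σ y).2.1, S.add_mem (σ y).1.2 (S.smul_mem _ (σ y).2.2.1), ?_⟩
  have hgv : (σ y).2.1 v = 0 := (σ y).2.2.2
  calc ((σ y).1.1 + c⁻¹ • (σ y).2.1) (v + c • x)
      = (σ y).1.1 v + (σ y).2.1 x + c • (σ y).1.1 x := by
        rw [LinearMap.add_apply, LinearMap.smul_apply, map_add, map_add, map_smul, map_smul, hgv,
          zero_add, inv_smul_smul₀ hc, add_right_comm]
    _ = y + c • (σ y).1.1 x := by rw [hσ_apply]

theorem exists_forall_isGeneric [Infinite K] {ι : Type*} [Finite ι]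
    (S : ι → Submodule K (V →ₗ[K] U)) [∀ m, FiniteDimensional K (S m)] :
    ∃ v, ∀ m, IsGeneric (S m) v := by
  cases nonempty_fintype ι
  let r (v : V) : ℕ := ∑ m, finrank K (evalImage (S m) v)
  have hbdd : BddAbove (Set.range r) := by
    refine ⟨∑ m, finrank K (S m), ?_⟩
    rintro _ ⟨v, rfl⟩
    exact Finset.sum_le_sum fun m _ ↦ Submodule.finrank_map_le _ _
  obtain ⟨_, ⟨v, rfl⟩, hmax⟩ := hbdd.exists_isGreatest_of_nonempty (Set.range_nonempty r)
  refine ⟨v, fun m x ↦ ?_⟩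
  let P (m : ι) : Submodule K U := evalImage (S m) v ⊔ evalImage (vanishingAt (S m) v) x
  have hle (m : ι) : finrank K (evalImage (S m) v) ≤ finrank K (P m) :=
    Submodule.finrank_mono le_sup_left
  obtain ⟨c, hc⟩ :=
    (Filter.eventually_all.2 fun m ↦ eventually_finrank_evalImage_sup_le (S m) v x).exists
  have hsum : ∑ m, finrank K (P m) ≤ r v :=
    (Finset.sum_le_sum fun m _ ↦ hc m).trans (hmax ⟨v + c • x, rfl⟩)
  have heq : finrank K (evalImage (S m) v) = finrank K (P m) :=
    (Finset.sum_eq_sum_iff_of_le fun m _ ↦ hle m).1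
      (hsum.antisymm' (Finset.sum_le_sum fun m _ ↦ hle m)) m (Finset.mem_univ m)
  exact le_sup_right.trans_eq (Submodule.eq_of_le_of_finrank_eq le_sup_left heq).symm

theorem exists_isGeneric_antitone_disjoint_sup_eq [Infinite K] {p : ℕ}
    (S : Fin p → Submodule K (V →ₗ[K] U)) (hS : Antitone S)
    (hfin : ∀ m, FiniteDimensional K (S m)) :
    ∃ (v : V) (W : Fin p → Submodule K (V →ₗ[K] U)), (∀ m, IsGeneric (S m) v) ∧ Antitone W ∧
      ∀ m, Disjoint (W m) (LinearMap.ker (LinearMap.applyₗ v)) ∧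
        W m ⊔ vanishingAt (S m) v = S m := by
  obtain ⟨v, hv⟩ := exists_forall_isGeneric S
  obtain ⟨W, hW, -, h⟩ := exists_antitone_disjoint_sup_inf_eq hS (fun _ ↦ bot_le)
    (disjoint_bot_left (a := LinearMap.ker (LinearMap.applyₗ v)))
  exact ⟨v, W, hv, hW, h⟩

/-- The greedy procedure splitting `S 0`. At stage `j` a vector `v j` generic for what is left,
`S j`, is chosen; the summand `W j` is a complement in `S j` of the maps killing `v j`, and those
maps form `S (j + 1)`. -/
structure IsPeeling (S W : ℕ → Submodule K (V →ₗ[K] U)) (v : ℕ → V) : Prop where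
  succ_eq : ∀ j, S (j + 1) = vanishingAt (S j) (v j)
  disjoint : ∀ j, Disjoint (W j) (LinearMap.ker (LinearMap.applyₗ (v j)))
  sup_succ : ∀ j, W j ⊔ S (j + 1) = S j
  isGeneric : ∀ j, IsGeneric (S j) (v j)

theorem exists_isPeeling [Infinite K] {p : ℕ} {T : Fin p → Submodule K (V →ₗ[K] U)}
    [∀ m, FiniteDimensional K (T m)] (hT : Antitone T) :
    ∃ (S W : Fin p → ℕ → Submodule K (V →ₗ[K] U)) (v : ℕ → V),
      (∀ m, S m 0 = T m) ∧ Antitone S ∧ Antitone W ∧ ∀ m, IsPeeling (S m) (W m) v := by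
  choose! v W hgen hWanti hW using
    exists_isGeneric_antitone_disjoint_sup_eq (K := K) (V := V) (U := U) (p := p)
  obtain ⟨S, hS0, hSsucc⟩ : ∃ S : ℕ → Fin p → Submodule K (V →ₗ[K] U),
      S 0 = T ∧ ∀ j m, S (j + 1) m = vanishingAt (S j m) (v (S j)) :=
    ⟨Nat.rec T fun _ S m ↦ vanishingAt (S m) (v S), rfl, fun _ _ ↦ rfl⟩
  have hS (j : ℕ) : Antitone (S j) ∧ ∀ m, FiniteDimensional K (S j m) := by
    induction j with
    | zero => exact hS0 ▸ ⟨hT, ‹_›⟩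
    | succ j ih =>
      have := ih.2
      refine ⟨fun _ _ h ↦ ?_, fun m ↦ ?_⟩
      · simpa only [hSsucc] using inf_le_inf_right _ (ih.1 h)
      · rw [hSsucc]
        infer_instance
  exact ⟨fun m j ↦ S j m, fun m j ↦ W (S j) m, fun j ↦ v (S j), congrFun hS0,
    fun _ _ h j ↦ (hS j).1 h, fun _ _ h j ↦ hWanti _ (hS j).1 (hS j).2 h, fun m ↦
    { succ_eq := fun j ↦ hSsucc j m
      disjoint := fun j ↦ (hW _ (hS j).1 (hS j).2 m).1
      sup_succ := fun j ↦ by simpa only [hSsucc] using (hW _ (hS j).1 (hS j).2 m).2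
      isGeneric := fun j ↦ hgen _ (hS j).1 (hS j).2 m }⟩

namespace IsPeeling

variable {S W : ℕ → Submodule K (V →ₗ[K] U)} {v : ℕ → V}

theorem antitone (h : IsPeeling S W v) : Antitone S :=
  antitone_nat_of_succ_le fun j ↦ (h.succ_eq j).trans_le inf_le_left

theorem summand_le (h : IsPeeling S W v) (j : ℕ) : W j ≤ S j :=
  le_sup_left.trans_eq (h.sup_succ j)

theorem le_ker_of_lt (h : IsPeeling S W v) {i j : ℕ} (hij : i < j) :
    S j ≤ LinearMap.ker (LinearMap.applyₗ (v i)) :=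
  (h.antitone hij).trans ((h.succ_eq i).trans_le inf_le_right)

theorem summand_le_ker_of_lt (h : IsPeeling S W v) {i j : ℕ} (hij : i < j) :
    W j ≤ LinearMap.ker (LinearMap.applyₗ (v i)) :=
  (h.summand_le j).trans (h.le_ker_of_lt hij)

theorem evalImage_summand (h : IsPeeling S W v) (j : ℕ) :
    evalImage (W j) (v j) = evalImage (S j) (v j) := by
  have hbot : evalImage (S (j + 1)) (v j) = ⊥ :=
    LinearMap.le_ker_iff_map.1 (h.le_ker_of_lt j.lt_succ_self)
  rw [← h.sup_succ j, evalImage, evalImage, Submodule.map_sup, ← evalImage, ← evalImage, hbot,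
    sup_bot_eq]

theorem apply_mem_evalImage (h : IsPeeling S W v) {i j : ℕ} (hij : i < j) {f : V →ₗ[K] U}
    (hf : f ∈ S j) (x : V) : f x ∈ evalImage (W i) (v i) := by
  rw [h.evalImage_summand i]
  exact h.isGeneric i x ⟨f, h.succ_eq i ▸ h.antitone hij hf, rfl⟩

theorem eq_bot_of_summand_eq_bot (h : IsPeeling S W v) {j : ℕ} (hj : W j = ⊥) : S j = ⊥ := by
  have hsucc : S (j + 1) = S j := by rw [← h.sup_succ j, hj, bot_sup_eq]
  refine (Submodule.eq_bot_iff _).2 fun f hf ↦ LinearMap.ext fun x ↦ ?_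
  simpa [hj] using h.apply_mem_evalImage j.lt_succ_self (hsucc.symm ▸ hf) x

theorem succ_lt (h : IsPeeling S W v) {j : ℕ} (hj : S j ≠ ⊥) : S (j + 1) < S j := by
  refine (h.antitone j.le_succ).lt_of_ne fun heq ↦ hj (h.eq_bot_of_summand_eq_bot ?_)
  exact (h.disjoint j).eq_bot_of_le
    ((h.summand_le j).trans (heq.symm.trans_le (h.le_ker_of_lt j.lt_succ_self)))

theorem exists_eq_bot (h : IsPeeling S W v) [FiniteDimensional K (S 0)] : ∃ j, S j = ⊥ := by
  by_contra! hne
  have (j : ℕ) : FiniteDimensional K (S j) :=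
    Submodule.finiteDimensional_of_le (h.antitone j.zero_le)
  exact not_strictAnti_of_wellFoundedLT (fun j ↦ finrank K (S j))
    (strictAnti_nat_of_succ_lt fun j ↦ Submodule.finrank_lt_finrank_of_lt (h.succ_lt (hne j)))

theorem iSupIndep (h : IsPeeling S W v) : _root_.iSupIndep W :=
  iSupIndep_of_triangular (fun j ↦ LinearMap.applyₗ (v j)) h.disjoint
    fun _ _ ↦ h.summand_le_ker_of_lt

theorem iSup_eq (h : IsPeeling S W v) {n : ℕ} (hn : S n = ⊥) : ⨆ j : Fin n, W j = S 0 := by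
  have hpartial (m : ℕ) : (⨆ j < m, W j) ⊔ S m = S 0 := by
    induction m with
    | zero => simp
    | succ m ih => rw [Nat.iSup_lt_succ, sup_assoc, h.sup_succ, ih]
  rw [← hpartial n, hn, sup_bot_eq, iSup_subtype', ← Fin.equivSubtype.iSup_comp]
  rfl

theorem linearIndependent (h : IsPeeling S W v) {n : ℕ} (hn : ∀ j < n, S j ≠ ⊥) :
    LinearIndependent K fun j : Fin n ↦ v j := by
  have hW (j : Fin n) : ∃ f ∈ W j, f ≠ 0 :=
    Submodule.exists_mem_ne_zero_of_ne_bot (mt h.eq_bot_of_summand_eq_bot (hn j j.2))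
  choose f hf hf0 using hW
  exact linearIndependent_of_triangular f
    (fun j hj ↦ hf0 j (LinearMap.disjoint_ker.1 (h.disjoint j) _ (hf j) hj))
    fun i j hij ↦ h.summand_le_ker_of_lt hij (hf j)

end IsPeeling

theorem chain_decomposition_general [Infinite K]
    {p : ℕ} {T : Fin p → Submodule K (V →ₗ[K] U)} [∀ m, FiniteDimensional K (T m)]
    (hT : Antitone T) :
    ∃ (s : Fin p → ℕ) (v : ℕ → V) (W : Fin p → ℕ → Submodule K (V →ₗ[K] U)),
      Antitone s ∧ (∀ m, T m ≠ ⊥ → 1 ≤ s m) ∧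
      (∀ m, LinearIndependent K fun j : Fin (s m) ↦ v j) ∧
      (∀ m, iSupIndep fun j : Fin (s m) ↦ W m j) ∧
      (∀ m, ⨆ j : Fin (s m), W m j = T m) ∧
      Antitone W ∧
      (∀ m j, finrank K (W m j) = finrank K (evalImage (W m j) (v j))) ∧
      (∀ m i j, i < j → evalImage (W m j) (v i) = ⊥) ∧
      (∀ m i j, i < j → ∀ f ∈ W m j, ∀ x, f x ∈ evalImage (W m i) (v i)) := by
  classical
  obtain ⟨S, W, v, hS0, hS, hW, h⟩ := exists_isPeeling hT
  have hex (m : Fin p) : ∃ j, S m j = ⊥ := by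
    have : FiniteDimensional K (S m 0) := by rw [hS0]; infer_instance
    exact (h m).exists_eq_bot
  have hbot (m : Fin p) : S m (Nat.find (hex m)) = ⊥ := Nat.find_spec (hex m)
  refine ⟨fun m ↦ Nat.find (hex m), v, W, fun i j hij ↦ Nat.find_min' _ ?_, fun m hm ↦ ?_,
    fun m ↦ (h m).linearIndependent fun j ↦ Nat.find_min (hex m),
    fun m ↦ (h m).iSupIndep.comp Fin.val_injective, fun m ↦ ?_, hW,
    fun m j ↦ (finrank_evalImage_eq_of_disjoint ((h m).disjoint j)).symm,
    fun m i j hij ↦ LinearMap.le_ker_iff_map.1 ((h m).summand_le_ker_of_lt hij),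
    fun m i j hij f hf ↦ (h m).apply_mem_evalImage hij ((h m).summand_le j hf)⟩
  · exact le_bot_iff.1 ((hS hij _).trans_eq (hbot i))
  · exact (Nat.find_pos (hex m)).2 (by rwa [hS0])
  · rw [(h m).iSup_eq (hbot m), hS0]

end Field

/-- **Theorem 2.3 (decomposition associated to a chain of subspaces of endomorphisms).**
Given a chain `T (p-1) ≤ … ≤ T 1 ≤ T 0` (here `T 0` plays the role of `T_1` of the paper and
`T (p-1)` the role of `T_p`) of linear subspaces of `End(V)` with `T (p-1) ≠ 0`, there are a
partition `s 0 ≥ s 1 ≥ … ≥ s (p-1) ≥ 1`, a linearly independent family `v 0, …, v (s 0 - 1)`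
and subspaces `W m j ⊆ End(V)` (`0 ≤ m < p`, `0 ≤ j < s m`) such that:
(1) `T m` is the internal direct sum of the `W m j`, `j < s m`, and `W (m+1) j ≤ W m j`;
(2) `dim (W m j) = dim (W m j · v j)`;
(3) `W m j · v i = 0` for `i < j < s m`;
(4) `f x ∈ W m i · v i` for all `f ∈ W m j`, `x ∈ V`, `i < j < s m`. -/
theorem chain_decomposition
    (K : Type) [Field K] [CharZero K]
    (V : Type) [AddCommGroup V] [Module K V] [FiniteDimensional K V]
    (p : ℕ) (hp : 0 < p) (T : Fin p → Submodule K (Module.End K V))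
    (hchain : ∀ i j : Fin p, i ≤ j → T j ≤ T i)
    (hbot : T ⟨p - 1, by omega⟩ ≠ ⊥) :
    ∃ (s : Fin p → ℕ) (v : ℕ → V) (W : Fin p → ℕ → Submodule K (Module.End K V)),
      (∀ i j : Fin p, i ≤ j → s j ≤ s i) ∧ (∀ m : Fin p, 1 ≤ s m) ∧
      LinearIndependent K (fun j : Fin (s ⟨0, hp⟩) => v j) ∧
      -- (1) internal direct sums, compatible with the chain
      (∀ m : Fin p, iSupIndep (fun j : Fin (s m) => W m j)) ∧
      (∀ m : Fin p, (⨆ j : Fin (s m), W m j) = T m) ∧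
      (∀ (m : ℕ) (h : m + 1 < p), ∀ j < s ⟨m + 1, h⟩,
        W ⟨m + 1, h⟩ j ≤ W ⟨m, by omega⟩ j) ∧
      -- (2)
      (∀ m : Fin p, ∀ j < s m,
        finrank K (W m j) = finrank K ((W m j).map (LinearMap.applyₗ (v j)))) ∧
      -- (3)
      (∀ m : Fin p, ∀ i j : ℕ, i < j → j < s m →
        (W m j).map (LinearMap.applyₗ (v i)) = ⊥) ∧
      -- (4)
      (∀ m : Fin p, ∀ i j : ℕ, i < j → j < s m →
        ∀ f ∈ W m j, ∀ x : V, f x ∈ (W m i).map (LinearMap.applyₗ (v i))) := by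
  obtain ⟨s, v, W, hs, hpos, hli, hind, hsup, hW, hdim, hker, himg⟩ :=
    chain_decomposition_general (T := T) hchain
  exact ⟨s, v, W, fun _ _ h ↦ hs h,
    fun m ↦ hpos m (ne_bot_of_le_ne_bot hbot (hchain m _ (Nat.le_sub_one_of_lt m.2))),
    hli _, hind, hsup, fun m _ j _ ↦ hW (Nat.le_succ m) j, fun m j _ ↦ hdim m j,
    fun m i j hij _ ↦ hker m i j hij, fun m i j hij _ ↦ himg m i j hij⟩
end

section
/- Let p_0 ≥ 2 be an integer and let N, M be real numbers with M > 0 and N ≥ M. Then: (i) if N ≥ ((p_0−1)² + p_0²)·M, then sqrt( (2p_0/(p_0−1))·(N − M) ) ≥ sqrt( (2(p_0+1)/p_0)·N ); (ii) if p_0 ≥ 3 and N ≤ ((p_0−1)² + p_0²)·M, then sqrt( (2(p_0−1)/(p_0−2))·N + (2p_0(p_0−1)/(p_0−2)²)·M ) − (2/(p_0−2))·sqrt(M) ≥ sqrt( (2(p_0+1)/p_0)·N ); (iii) if p_0 = 2 and N ≤ 5·M, then (N + 3·M)/(2·sqrt(M)) ≥ sqrt(3·N). -/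
/-!
Put `p = p₀` and `m = √M`. The second and third bounds are each the largest root of
`(p - 2) x² + 4 m x = 2 (p - 1) N + 2 (p + 1) m²`, a quadratic equation for `p > 2` and a linear one
for `p = 2`. At `s = √((2 (p + 1) / p) N)` the right side exceeds the left by
`(2 / (p + 1)) (s - (p + 1) m)²`, so `s` is at most that root. For the first bound, the
difference of the two radicands is `2 (N - p² M) / (p (p - 1))`.
-/

theorem two_mul_add_one_div_mul_le_iff {p N M : ℝ} (hp : 1 < p) :
    (2 * (p + 1) / p) * N ≤ (2 * p / (p - 1)) * (N - M) ↔ p ^ 2 * M ≤ N := by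
  have hp₀ : 0 < p := by linarith
  have hp₁ : 0 < p - 1 := sub_pos.2 hp
  have hdiff : (2 * p / (p - 1)) * (N - M) - (2 * (p + 1) / p) * N =
      2 / (p * (p - 1)) * (N - p ^ 2 * M) := by
    field_simp
    ring
  have hcoeff : 0 < 2 / (p * (p - 1)) := div_pos two_pos (mul_pos hp₀ hp₁)
  rw [← sub_nonneg, hdiff, mul_nonneg_iff_of_pos_left hcoeff, sub_nonneg]

theorem le_sqrt_sub_of_quadratic_le {a b c x : ℝ} (ha : 0 < a)
    (h : a * x ^ 2 + 2 * b * x ≤ c) : x ≤ √(c / a + (b / a) ^ 2) - b / a := by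
  have hsq : (x + b / a) ^ 2 = (a * x ^ 2 + 2 * b * x) / a + (b / a) ^ 2 := by
    field_simp
    ring
  have hle : (x + b / a) ^ 2 ≤ c / a + (b / a) ^ 2 := by
    rw [hsq]
    gcongr
  exact le_sub_iff_add_le.2 (Real.le_sqrt_of_sq_le hle)

theorem sub_two_mul_sq_add_four_mul_le {p N s : ℝ} (hp : 0 < p)
    (hs : s ^ 2 = (2 * (p + 1) / p) * N) (m : ℝ) :
    (p - 2) * s ^ 2 + 4 * m * s ≤ 2 * (p - 1) * N + 2 * (p + 1) * m ^ 2 := by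
  have hN : N = p * s ^ 2 / (2 * (p + 1)) := by
    rw [hs]
    field_simp
  have hdiff : 2 * (p - 1) * N + 2 * (p + 1) * m ^ 2 - ((p - 2) * s ^ 2 + 4 * m * s) =
      2 / (p + 1) * (s - (p + 1) * m) ^ 2 := by
    rw [hN]
    field_simp
    ring
  rw [← sub_nonneg, hdiff]
  positivity

theorem sqrt_le_sqrt_sub_of_two_lt {p N M : ℝ} (hp : 2 < p) (hN : 0 ≤ N) (hM : 0 ≤ M) :
    √((2 * (p + 1) / p) * N) ≤
      √((2 * (p - 1) / (p - 2)) * N + (2 * p * (p - 1) / (p - 2) ^ 2) * M) -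
        (2 / (p - 2)) * √M := by
  have hp₀ : 0 < p := by linarith
  have hp₂ : p - 2 ≠ 0 := (sub_pos.2 hp).ne'
  have hs : √((2 * (p + 1) / p) * N) ^ 2 = (2 * (p + 1) / p) * N := Real.sq_sqrt (by positivity)
  have hquad := sub_two_mul_sq_add_four_mul_le hp₀ hs √M
  have hrad : (2 * (p - 1) * N + 2 * (p + 1) * √M ^ 2) / (p - 2) + (2 * √M / (p - 2)) ^ 2 =
      (2 * (p - 1) / (p - 2)) * N + (2 * p * (p - 1) / (p - 2) ^ 2) * M := by
    rw [div_pow, mul_pow, Real.sq_sqrt hM]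
    field_simp
    ring
  rw [← hrad, div_mul_eq_mul_div 2 (p - 2)]
  refine le_sqrt_sub_of_quadratic_le (sub_pos.2 hp) ?_
  linarith

theorem sqrt_three_mul_le {N M : ℝ} (hN : 0 ≤ N) (hM : 0 < M) :
    √(3 * N) ≤ (N + 3 * M) / (2 * √M) := by
  have hs : √(3 * N) ^ 2 = (2 * (2 + 1) / 2) * N := by
    rw [Real.sq_sqrt (by positivity)]
    ring
  have hlin := sub_two_mul_sq_add_four_mul_le two_pos hs √M
  rw [Real.sq_sqrt hM.le] at hlin
  rw [le_div_iff₀ (by positivity)]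
  linarith

theorem bounds_ge_first_bound_general {p N M : ℝ} (hN : 0 ≤ N) (hM : 0 < M) :
    (1 < p → p ^ 2 * M ≤ N →
        √((2 * (p + 1) / p) * N) ≤ √((2 * p / (p - 1)) * (N - M))) ∧
      (2 < p →
        √((2 * (p + 1) / p) * N) ≤
          √((2 * (p - 1) / (p - 2)) * N + (2 * p * (p - 1) / (p - 2) ^ 2) * M) -
            (2 / (p - 2)) * √M) ∧
      √(3 * N) ≤ (N + 3 * M) / (2 * √M) :=
  ⟨fun hp h => Real.sqrt_le_sqrt ((two_mul_add_one_div_mul_le_iff hp).2 h),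
    fun hp => sqrt_le_sqrt_sub_of_two_lt hp hN hM.le, sqrt_three_mul_le hN hM⟩

/-- **Final assertion of Theorem 3.6.**  For an integer `p₀ ≥ 2` and real numbers
`N ≥ M > 0`:
(i) if `N ≥ ((p₀-1)² + p₀²)·M` then `√((2p₀/(p₀-1))·(N-M)) ≥ √((2(p₀+1)/p₀)·N)`;
(ii) if `p₀ ≥ 3` and `N ≤ ((p₀-1)² + p₀²)·M` then
`√((2(p₀-1)/(p₀-2))·N + (2p₀(p₀-1)/(p₀-2)²)·M) - (2/(p₀-2))·√M ≥ √((2(p₀+1)/p₀)·N)`;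
(iii) if `p₀ = 2` and `N ≤ 5M` then `(N + 3M)/(2√M) ≥ √(3N)`. -/
theorem bounds_ge_first_bound
    (p₀ : ℕ) (hp₀ : 2 ≤ p₀) (N M : ℝ) (hM : 0 < M) (hNM : M ≤ N) :
    (((((p₀ : ℝ) - 1) ^ 2 + (p₀ : ℝ) ^ 2) * M ≤ N →
        Real.sqrt ((2 * ((p₀ : ℝ) + 1) / p₀) * N) ≤
          Real.sqrt ((2 * (p₀ : ℝ) / ((p₀ : ℝ) - 1)) * (N - M))) ∧
      (3 ≤ p₀ → N ≤ (((p₀ : ℝ) - 1) ^ 2 + (p₀ : ℝ) ^ 2) * M →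
        Real.sqrt ((2 * ((p₀ : ℝ) + 1) / p₀) * N) ≤
          Real.sqrt ((2 * ((p₀ : ℝ) - 1) / ((p₀ : ℝ) - 2)) * N +
              (2 * (p₀ : ℝ) * ((p₀ : ℝ) - 1) / ((p₀ : ℝ) - 2) ^ 2) * M) -
            (2 / ((p₀ : ℝ) - 2)) * Real.sqrt M) ∧
      (p₀ = 2 → N ≤ 5 * M →
        Real.sqrt (3 * N) ≤ (N + 3 * M) / (2 * Real.sqrt M))) := by
  obtain ⟨hlarge, hsmall, htwo⟩ := bounds_ge_first_bound_general (p := p₀) (hM.le.trans hNM) hM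
  refine ⟨fun h => hlarge (by exact_mod_cast hp₀) (le_trans ?_ h),
    fun hp₃ _ => hsmall (by exact_mod_cast hp₃), fun _ _ => htwo⟩
  gcongr
  exact le_add_of_nonneg_left (sq_nonneg _)
end

section
/- Let p_0 ≥ 1 be an integer and let N > 0 be a real number. For positive real numbers a_0, a_1, ..., a_{p_0−1}, t, set r_i = a_i + a_{i+1} + ⋯ + a_{p_0−1} + t for 0 ≤ i ≤ p_0−1 and r_{p_0} = t. Then the minimum of r_0 = a_0 + a_1 + ⋯ + a_{p_0−1} + t over all positive real tuples (a_0, ..., a_{p_0−1}, t) satisfying Σ_{i=0}^{p_0−1} a_i·r_{i+1} ≥ N is exactly sqrt( (2(p_0+1)/p_0)·N ); in particular every such tuple satisfies r_0 ≥ sqrt( (2(p_0+1)/p_0)·N ), with equality attained when a_0 = a_1 = ⋯ = a_{p_0−1} = t = sqrt( 2N/(p_0(p_0+1)) ). -/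
/-!
Since `a i = r i - r (i + 1)`, each constraint term satisfies
`2 * a i * r (i + 1) = r i ^ 2 - r (i + 1) ^ 2 - a i ^ 2`, so twice the constraint sum telescopes
to `r 0 ^ 2` minus the sum of the squares of the `p + 1` variables. These variables add up to
`r 0`, so by Cauchy–Schwarz their squares sum to at least `r 0 ^ 2 / (p + 1)`, with equality when
all variables are equal.
-/

open Finset

section CommRing

variable {R : Type*} [CommRing R] (a : ℕ → R) (t : R) (p : ℕ)

/-- The paper's tail sum `r i = a i + ⋯ + a (p - 1) + t`, with `p` in the role of `p₀`. It is `t`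
for every `i ≥ p`. -/
def tailSum (i : ℕ) : R :=
  (∑ j ∈ Ico i p, a j) + t

theorem tailSum_zero : tailSum a t p 0 = (∑ i ∈ range p, a i) + t := by
  rw [tailSum, range_eq_Ico]

theorem tailSum_self : tailSum a t p p = t := by
  simp [tailSum]

variable {p} in
theorem tailSum_eq_add_tailSum_succ {i : ℕ} (hi : i < p) :
    tailSum a t p i = a i + tailSum a t p (i + 1) := by
  rw [tailSum, tailSum, sum_eq_sum_Ico_succ_bot hi, add_assoc]

theorem two_mul_sum_mul_tailSum :
    2 * ∑ i ∈ range p, a i * tailSum a t p (i + 1) =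
      tailSum a t p 0 ^ 2 - ((∑ i ∈ range p, a i ^ 2) + t ^ 2) := by
  have telescope :
      ∑ i ∈ range p, (2 * (a i * tailSum a t p (i + 1)) + a i ^ 2) =
        tailSum a t p 0 ^ 2 - t ^ 2 := by
    calc
      _ = ∑ i ∈ range p, (tailSum a t p i ^ 2 - tailSum a t p (i + 1) ^ 2) := by
        refine sum_congr rfl fun i hi => ?_
        rw [tailSum_eq_add_tailSum_succ a t (mem_range.mp hi)]
        ring
      _ = tailSum a t p 0 ^ 2 - t ^ 2 := by
        rw [sum_range_sub', tailSum_self]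
  rw [sum_add_distrib, ← mul_sum] at telescope
  linear_combination telescope

theorem tailSum_const_zero (c : R) : tailSum (fun _ => c) c p 0 = (p + 1) * c := by
  simp [tailSum, add_one_mul]

theorem two_mul_sum_mul_tailSum_const (c : R) :
    2 * ∑ i ∈ range p, c * tailSum (fun _ => c) c p (i + 1) = p * (p + 1) * c ^ 2 := by
  rw [two_mul_sum_mul_tailSum (fun _ => c), tailSum_const_zero, sum_const, card_range, nsmul_eq_mul]
  ring

end CommRing

section Ordered

variable {R : Type*} [CommRing R] [LinearOrder R] [IsStrictOrderedRing R]

theorem sq_sum_add_le_card_add_one_mul {ι : Type*} (s : Finset ι) (f : ι → R) (t : R) :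
    ((∑ i ∈ s, f i) + t) ^ 2 ≤ (#s + 1) * ((∑ i ∈ s, f i ^ 2) + t ^ 2) := by
  simpa [add_comm] using sq_sum_le_card_mul_sum_sq (s := s.insertNone) (f := fun o => o.elim t f)

theorem two_mul_add_one_mul_sum_mul_tailSum_le (a : ℕ → R) (t : R) (p : ℕ) :
    2 * (p + 1) * ∑ i ∈ range p, a i * tailSum a t p (i + 1) ≤ p * tailSum a t p 0 ^ 2 := by
  have cauchy_schwarz :
      tailSum a t p 0 ^ 2 ≤ (p + 1) * ((∑ i ∈ range p, a i ^ 2) + t ^ 2) := by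
    simpa only [tailSum_zero, card_range] using sq_sum_add_le_card_add_one_mul (range p) a t
  linear_combination cauchy_schwarz + (p + 1) * two_mul_sum_mul_tailSum a t p

end Ordered

theorem sqrt_le_abs_tailSum_zero {p : ℕ} (hp : 0 < p) {N : ℝ} (a : ℕ → ℝ) (t : ℝ)
    (hN : N ≤ ∑ i ∈ range p, a i * tailSum a t p (i + 1)) :
    √((2 * ((p : ℝ) + 1) / p) * N) ≤ |tailSum a t p 0| := by
  have hp' : (0 : ℝ) < p := Nat.cast_pos.mpr hp
  refine Real.sqrt_le_iff.mpr ⟨abs_nonneg _, ?_⟩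
  rw [sq_abs, div_mul_eq_mul_div, div_le_iff₀' hp']
  calc
    2 * ((p : ℝ) + 1) * N ≤ 2 * (p + 1) * ∑ i ∈ range p, a i * tailSum a t p (i + 1) := by gcongr
    _ ≤ p * tailSum a t p 0 ^ 2 := two_mul_add_one_mul_sum_mul_tailSum_le a t p

theorem add_one_mul_sqrt_two_mul_div {x : ℝ} (hx : 0 < x) (N : ℝ) :
    (x + 1) * √(2 * N / (x * (x + 1))) = √((2 * (x + 1) / x) * N) := by
  have hx1 : 0 ≤ x + 1 := by positivity
  rw [← Real.sqrt_sq hx1, ← Real.sqrt_mul (sq_nonneg _), Real.sqrt_sq hx1]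
  congr 1
  field_simp

theorem sum_mul_tailSum_const_sqrt {p : ℕ} (hp : 0 < p) {N : ℝ} (hN : 0 ≤ N) {c : ℝ}
    (hc : c = √(2 * N / ((p : ℝ) * ((p : ℝ) + 1)))) :
    ∑ i ∈ range p, c * tailSum (fun _ => c) c p (i + 1) = N := by
  have hc_sq : p * ((p : ℝ) + 1) * c ^ 2 = 2 * N := by
    rw [hc, Real.sq_sqrt (by positivity)]
    field_simp
  linear_combination (two_mul_sum_mul_tailSum_const p c + hc_sq) / 2

/-- **First simplification of Problem 3.3 with real variables.**  For an integer `p₀ ≥ 1` and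
a real `N > 0`, the minimum of `r₀ = a 0 + … + a (p₀-1) + t` over all positive real tuples
`(a 0, …, a (p₀-1), t)` satisfying `∑_{i=0}^{p₀-1} a i · r (i+1) ≥ N`, where
`r i = a i + … + a (p₀-1) + t`, is exactly `√((2(p₀+1)/p₀)·N)`; in particular every such
tuple satisfies `r₀ ≥ √((2(p₀+1)/p₀)·N)`, with equality attained at the constant tuple
`a 0 = … = a (p₀-1) = t = √(2N/(p₀(p₀+1)))`. -/
theorem first_simplification_min
    (p₀ : ℕ) (hp₀ : 1 ≤ p₀) (N : ℝ) (hN : 0 < N) :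
    IsLeast {r : ℝ | ∃ (a : ℕ → ℝ) (t : ℝ),
        (∀ i < p₀, 0 < a i) ∧ 0 < t ∧
        N ≤ (∑ i ∈ Finset.range p₀, a i * ((∑ j ∈ Finset.Ico (i + 1) p₀, a j) + t)) ∧
        r = (∑ i ∈ Finset.range p₀, a i) + t}
      (Real.sqrt ((2 * ((p₀ : ℝ) + 1) / p₀) * N)) ∧
    (∀ c : ℝ, c = Real.sqrt (2 * N / ((p₀ : ℝ) * ((p₀ : ℝ) + 1))) →
      N ≤ (∑ i ∈ Finset.range p₀, c * ((∑ _j ∈ Finset.Ico (i + 1) p₀, c) + c)) ∧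
      (∑ _i ∈ Finset.range p₀, c) + c = Real.sqrt ((2 * ((p₀ : ℝ) + 1) / p₀) * N)) := by
  have hp : (0 : ℝ) < p₀ := Nat.cast_pos.mpr hp₀
  have attained : ∀ c : ℝ, c = √(2 * N / ((p₀ : ℝ) * ((p₀ : ℝ) + 1))) →
      N ≤ (∑ i ∈ range p₀, c * tailSum (fun _ => c) c p₀ (i + 1)) ∧
      (∑ _i ∈ range p₀, c) + c = √((2 * ((p₀ : ℝ) + 1) / p₀) * N) := by
    intro c hc
    refine ⟨(sum_mul_tailSum_const_sqrt hp₀ hN.le hc).ge, ?_⟩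
    rw [← tailSum_zero (fun _ => c), tailSum_const_zero, hc, add_one_mul_sqrt_two_mul_div hp]
  refine ⟨⟨?_, ?_⟩, attained⟩
  · obtain ⟨feasible, value⟩ := attained _ rfl
    have hc : 0 < √(2 * N / ((p₀ : ℝ) * ((p₀ : ℝ) + 1))) := by positivity
    exact ⟨fun _ => _, _, fun _ _ => hc, hc, feasible, value.symm⟩
  · rintro _ ⟨a, t, ha, ht, feasible, rfl⟩
    have hr : 0 ≤ (∑ i ∈ range p₀, a i) + t :=
      add_nonneg (sum_nonneg fun i hi => (ha i (mem_range.mp hi)).le) ht.le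
    simpa only [tailSum_zero, abs_of_nonneg hr] using sqrt_le_abs_tailSum_zero hp₀ a t feasible
end

section
/- Let p_0 ≥ 2 be an integer and let N, M be real numbers with M > 0 and N ≥ ((p_0−1)² + p_0²)·M. For positive real numbers a_0, a_1, ..., a_{p_0−1}, t, set r_i = a_i + a_{i+1} + ⋯ + a_{p_0−1} + t for 0 ≤ i ≤ p_0−1 and r_{p_0} = t. Then every positive real tuple (a_0, ..., a_{p_0−1}, t) satisfying the two constraints Σ_{i=0}^{p_0−1} a_i·r_{i+1} = N and a_0·t = M satisfies r_0 = a_0 + a_1 + ⋯ + a_{p_0−1} + t ≥ sqrt( (2p_0/(p_0−1))·(N − M) ). -/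
/-!
Write `r₀ = ∑ a i + t`. Expanding the square, `r₀² = ∑ (a i)² + t² + 2N`, and so
`(a 0 + t)² + ∑_{i ≥ 1} (a i)² = r₀² - 2(N - M)` because `a 0 * t = M`. The `p₀` numbers
`a 0 + t, a 1, …, a (p₀ - 1)` still have sum `r₀`, so Cauchy–Schwarz gives
`r₀² ≤ p₀ (r₀² - 2(N - M))`, which is the claimed bound.
-/

open Finset

theorem sq_sum_range_add {R : Type*} [CommSemiring R] (a : ℕ → R) (n : ℕ) (t : R) :
    (∑ i ∈ range n, a i + t) ^ 2 = ∑ i ∈ range n, a i ^ 2 + t ^ 2 +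
      2 * ∑ i ∈ range n, a i * (∑ j ∈ Ico (i + 1) n, a j + t) := by
  induction n generalizing t with
  | zero => simp
  | succ n ih =>
    have tail_succ : ∀ i ∈ range n, a i * (∑ j ∈ Ico (i + 1) (n + 1), a j + t) =
        a i * (∑ j ∈ Ico (i + 1) n, a j + (a n + t)) := fun i hi ↦ by
      rw [sum_Ico_succ_top (Nat.succ_le_of_lt (mem_range.mp hi)), add_assoc]
    -- The last summand `a n` is absorbed into `t`.
    rw [sum_range_succ, add_assoc, ih, sum_range_succ, sum_range_succ, sum_congr rfl tail_succ,
      Ico_self, sum_empty]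
    ring

section OrderedRing

variable {R : Type*} [CommRing R] [LinearOrder R] [IsStrictOrderedRing R]

theorem sq_sum_add_le_card_mul {ι : Type*} {s : Finset ι} {k : ι} (hk : k ∈ s) (f : ι → R)
    (t : R) :
    (∑ i ∈ s, f i + t) ^ 2 ≤ #s * (∑ i ∈ s, f i ^ 2 + t ^ 2 + 2 * (f k * t)) := by
  classical
  have sum_eq : ∑ i ∈ s, (f i + if i = k then t else 0) = ∑ i ∈ s, f i + t := by
    rw [sum_add_distrib, sum_ite_eq_of_mem' s k _ hk]
  have sum_sq_eq : ∑ i ∈ s, (f i + if i = k then t else 0) ^ 2 =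
      ∑ i ∈ s, f i ^ 2 + t ^ 2 + 2 * (f k * t) := by
    have sq_eq (i : ι) : (f i + if i = k then t else 0) ^ 2 =
        f i ^ 2 + if i = k then t ^ 2 + 2 * (f i * t) else 0 := by
      split_ifs <;> ring
    simp only [sq_eq]
    rw [sum_add_distrib, sum_ite_eq_of_mem' s k _ hk, add_assoc]
  rw [← sum_eq, ← sum_sq_eq]
  exact sq_sum_le_card_mul_sum_sq

theorem two_mul_mul_sum_mul_tail_sub_le_mul_sq {n : ℕ} (hn : 0 < n) (a : ℕ → R) (t : R) :
    2 * n * (∑ i ∈ range n, a i * (∑ j ∈ Ico (i + 1) n, a j + t) - a 0 * t) ≤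
      (n - 1) * (∑ i ∈ range n, a i + t) ^ 2 := by
  have cauchy_schwarz := sq_sum_add_le_card_mul (mem_range.mpr hn) a t
  rw [card_range] at cauchy_schwarz
  linear_combination cauchy_schwarz - n * sq_sum_range_add a n t

end OrderedRing

theorem second_simplification_case1_general {p₀ : ℕ} (hp₀ : 2 ≤ p₀) {N M : ℝ} {a : ℕ → ℝ} {t : ℝ}
    (hN : ∑ i ∈ range p₀, a i * (∑ j ∈ Ico (i + 1) p₀, a j + t) = N) (hM : a 0 * t = M) :
    √(2 * p₀ / (p₀ - 1) * (N - M)) ≤ |∑ i ∈ range p₀, a i + t| := by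
  have p₀_sub_one_pos : (0 : ℝ) < p₀ - 1 := sub_pos.mpr (Nat.one_lt_cast.mpr hp₀)
  refine Real.sqrt_le_iff.mpr ⟨abs_nonneg _, ?_⟩
  rw [sq_abs, div_mul_eq_mul_div, div_le_iff₀' p₀_sub_one_pos, ← hN, ← hM]
  exact two_mul_mul_sum_mul_tail_sub_le_mul_sq (by lia) a t

/-- **Second simplification of Problem 3.3 with real variables, case
`N ≥ ((p₀-1)² + p₀²)·M`.**  For an integer `p₀ ≥ 2` and reals `M > 0`,
`N ≥ ((p₀-1)² + p₀²)·M`, every positive real tuple `(a 0, …, a (p₀-1), t)` satisfying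
`∑_{i=0}^{p₀-1} a i · r (i+1) = N` and `a 0 · t = M`, where `r i = a i + … + a (p₀-1) + t`,
satisfies `r₀ = a 0 + … + a (p₀-1) + t ≥ √((2p₀/(p₀-1))·(N - M))`. -/
theorem second_simplification_case1
    (p₀ : ℕ) (hp₀ : 2 ≤ p₀) (N M : ℝ) (hM : 0 < M)
    (hNM : (((p₀ : ℝ) - 1) ^ 2 + (p₀ : ℝ) ^ 2) * M ≤ N)
    (a : ℕ → ℝ) (t : ℝ) (ha : ∀ i < p₀, 0 < a i) (ht : 0 < t)
    (hconstr : (∑ i ∈ Finset.range p₀, a i * ((∑ j ∈ Finset.Ico (i + 1) p₀, a j) + t)) = N)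
    (hM' : a 0 * t = M) :
    Real.sqrt ((2 * (p₀ : ℝ) / ((p₀ : ℝ) - 1)) * (N - M)) ≤
      (∑ i ∈ Finset.range p₀, a i) + t := by
  have r₀_nonneg : 0 ≤ ∑ i ∈ range p₀, a i + t :=
    add_nonneg (sum_nonneg fun i hi ↦ (ha i (mem_range.mp hi)).le) ht.le
  exact (second_simplification_case1_general hp₀ hconstr hM').trans_eq (abs_of_nonneg r₀_nonneg)
end

section
/- Let p_0 ≥ 3 be an integer and let N, M be real numbers with M > 0 and N ≤ ((p_0−1)² + p_0²)·M. For positive real numbers a_0, a_1, ..., a_{p_0−1}, t, set r_i = a_i + a_{i+1} + ⋯ + a_{p_0−1} + t for 0 ≤ i ≤ p_0−1 and r_{p_0} = t. Then every positive real tuple (a_0, ..., a_{p_0−1}, t) satisfying the two constraints Σ_{i=0}^{p_0−1} a_i·r_{i+1} = N and a_0·t = M satisfies r_0 = a_0 + a_1 + ⋯ + a_{p_0−1} + t ≥ sqrt( (2(p_0−1)/(p_0−2))·N + (2p_0(p_0−1)/(p_0−2)²)·M ) − (2/(p_0−2))·sqrt(M). -/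
/-!
Put `s = √M`, `R = r₀` and `u = a₀ + t`. Telescoping `rᵢ² - rᵢ₊₁² = aᵢ² + 2 aᵢ rᵢ₊₁` gives
`2N = R² - t² - ∑ aᵢ²`, and Cauchy–Schwarz on `a₁, …, a_{p₀-1}`, whose sum is `R - u`, bounds `N`
above by a concave quadratic in `u` with vertex `R / p₀`. Since `a₀ t = s²` forces `2s ≤ |u|`, for
`|R| ≤ 2 p₀ s` that quadratic is at most its value at the point `±2s` on the side of its vertex, and
solving for `|R|` gives the claimed bound. For `|R| ≥ 2 p₀ s` the claim reduces to the assumed upper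
bound on `N`, which is exactly the value at which both sides agree for `|R| = 2 p₀ s`.
-/

open Finset

section OrderedRing

theorem two_mul_sum_mul_tail_add_sum_sq {𝕜 : Type*} [CommRing 𝕜] (a : ℕ → 𝕜) (p : ℕ) (t : 𝕜) :
    2 * ∑ i ∈ range p, a i * ((∑ j ∈ Ico (i + 1) p, a j) + t) + ∑ i ∈ range p, a i ^ 2 =
      ((∑ i ∈ range p, a i) + t) ^ 2 - t ^ 2 := by
  let r : ℕ → 𝕜 := fun i => (∑ j ∈ Ico i p, a j) + t
  have r_sub_r_succ {i : ℕ} (hi : i ∈ range p) : r i - r (i + 1) = a i := by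
    simp only [r, sum_eq_sum_Ico_succ_bot (mem_range.1 hi) a]
    ring
  calc 2 * ∑ i ∈ range p, a i * r (i + 1) + ∑ i ∈ range p, a i ^ 2
      = ∑ i ∈ range p, (r i ^ 2 - r (i + 1) ^ 2) := by
        rw [mul_sum, ← sum_add_distrib]
        refine sum_congr rfl fun i hi => ?_
        rw [← r_sub_r_succ hi]
        ring
    _ = r 0 ^ 2 - r p ^ 2 := sum_range_sub' (fun i => r i ^ 2) p
    _ = ((∑ i ∈ range p, a i) + t) ^ 2 - t ^ 2 := by
        simp only [r, Ico_self, sum_empty, zero_add, range_eq_Ico]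

variable {𝕜 : Type*} [CommRing 𝕜] [LinearOrder 𝕜] [IsStrictOrderedRing 𝕜]

theorem sq_sum_range_sub_head_le (a : ℕ → 𝕜) (p : ℕ) :
    ((∑ i ∈ range p, a i) - a 0) ^ 2 ≤ (p - 1) * ((∑ i ∈ range p, a i ^ 2) - a 0 ^ 2) := by
  cases p with
  | zero => simp
  | succ n =>
    simpa [sum_range_succ'] using
      sq_sum_le_card_mul_sum_sq (s := range n) (f := fun i => a (i + 1))

theorem two_mul_sum_mul_tail_le (a : ℕ → 𝕜) (p : ℕ) (t : 𝕜) :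
    2 * (p - 1) * ∑ i ∈ range p, a i * ((∑ j ∈ Ico (i + 1) p, a j) + t) ≤
      (p - 2) * ((∑ i ∈ range p, a i) + t) ^ 2 + 2 * (p - 1) * (a 0 * t) +
        (2 * ((∑ i ∈ range p, a i) + t) * (a 0 + t) - p * (a 0 + t) ^ 2) := by
  linear_combination (p - 1 : 𝕜) * two_mul_sum_mul_tail_add_sum_sq a p t +
    sq_sum_range_sub_head_le a p

theorem two_mul_mul_sub_mul_sq_le_of_le_abs {p R c u : 𝕜} (hp : 0 ≤ p) (hR : |R| ≤ p * c)
    (hu : c ≤ |u|) : 2 * R * u - p * u ^ 2 ≤ 2 * |R| * c - p * c ^ 2 := by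
  have mul_le_abs_mul_abs : R * u ≤ |R| * |u| := (le_abs_self _).trans_eq (abs_mul R u)
  have two_mul_abs_le : 2 * |R| ≤ p * (|u| + c) := by
    linear_combination 2 * hR + mul_le_mul_of_nonneg_left hu hp
  have factored : 0 ≤ (|u| - c) * (p * (|u| + c) - 2 * |R|) :=
    mul_nonneg (sub_nonneg.2 hu) (sub_nonneg.2 two_mul_abs_le)
  linear_combination 2 * mul_le_abs_mul_abs + factored + p * sq_abs u

theorem quadratic_bound_of_abs_le {p s N R u : 𝕜} (hp : 2 ≤ p) (hR : |R| ≤ 2 * p * s)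
    (hu : 2 * s ≤ |u|)
    (hN : 2 * (p - 1) * N ≤
      (p - 2) * R ^ 2 + 2 * (p - 1) * s ^ 2 + (2 * R * u - p * u ^ 2)) :
    2 * (p - 1) * (p - 2) * N + 2 * p * (p - 1) * s ^ 2 ≤ ((p - 2) * |R| + 2 * s) ^ 2 := by
  have at_two_mul : 2 * R * u - p * u ^ 2 ≤ 2 * |R| * (2 * s) - p * (2 * s) ^ 2 :=
    two_mul_mul_sub_mul_sq_le_of_le_abs (zero_le_two.trans hp) (by linarith) hu
  have scaled := mul_le_mul_of_nonneg_left (hN.trans (add_le_add_right at_two_mul _))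
    (sub_nonneg.2 hp)
  linear_combination scaled - (p - 2) ^ 2 * sq_abs R

theorem quadratic_bound_of_le_abs {p s N R : 𝕜} (hp : 2 ≤ p) (hs : 0 ≤ s)
    (hR : 2 * p * s ≤ |R|) (hN : N ≤ ((p - 1) ^ 2 + p ^ 2) * s ^ 2) :
    2 * (p - 1) * (p - 2) * N + 2 * p * (p - 1) * s ^ 2 ≤ ((p - 2) * |R| + 2 * s) ^ 2 := by
  have : 0 ≤ p - 1 := by linarith
  have : 0 ≤ p - 2 := sub_nonneg.2 hp
  have : 0 ≤ p := by linarith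
  calc 2 * (p - 1) * (p - 2) * N + 2 * p * (p - 1) * s ^ 2
      ≤ 2 * (p - 1) * (p - 2) * (((p - 1) ^ 2 + p ^ 2) * s ^ 2) + 2 * p * (p - 1) * s ^ 2 := by
        gcongr
    _ = ((p - 2) * (2 * p * s) + 2 * s) ^ 2 := by ring
    _ ≤ ((p - 2) * |R| + 2 * s) ^ 2 := by gcongr

end OrderedRing

theorem sqrt_sub_le_of_quadratic_bound {p s N R : ℝ} (hp : 2 < p) (hs : 0 ≤ s) (hR : 0 ≤ R)
    (h : 2 * (p - 1) * (p - 2) * N + 2 * p * (p - 1) * s ^ 2 ≤ ((p - 2) * R + 2 * s) ^ 2) :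
    √((2 * (p - 1) / (p - 2)) * N + (2 * p * (p - 1) / (p - 2) ^ 2) * s ^ 2) -
      (2 / (p - 2)) * s ≤ R := by
  have hp₂ : 0 < p - 2 := sub_pos.2 hp
  rw [sub_le_iff_le_add]
  refine Real.sqrt_le_iff.2 ⟨by positivity, ?_⟩
  calc (2 * (p - 1) / (p - 2)) * N + (2 * p * (p - 1) / (p - 2) ^ 2) * s ^ 2
      = (2 * (p - 1) * (p - 2) * N + 2 * p * (p - 1) * s ^ 2) / (p - 2) ^ 2 := by field_simp
    _ ≤ ((p - 2) * R + 2 * s) ^ 2 / (p - 2) ^ 2 := by gcongr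
    _ = (R + 2 / (p - 2) * s) ^ 2 := by field_simp

theorem second_simplification_case2_general
    (p₀ : ℕ) (hp₀ : 3 ≤ p₀) (N M : ℝ) (hM : 0 ≤ M)
    (hNM : N ≤ (((p₀ : ℝ) - 1) ^ 2 + (p₀ : ℝ) ^ 2) * M)
    (a : ℕ → ℝ) (t : ℝ)
    (hconstr : (∑ i ∈ range p₀, a i * ((∑ j ∈ Ico (i + 1) p₀, a j) + t)) = N)
    (hM' : a 0 * t = M) :
    √((2 * ((p₀ : ℝ) - 1) / ((p₀ : ℝ) - 2)) * N +
          (2 * (p₀ : ℝ) * ((p₀ : ℝ) - 1) / ((p₀ : ℝ) - 2) ^ 2) * M) -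
        (2 / ((p₀ : ℝ) - 2)) * √M ≤
      |(∑ i ∈ range p₀, a i) + t| := by
  have hp : (2 : ℝ) < p₀ := by exact_mod_cast hp₀
  obtain ⟨s, hs, rfl⟩ : ∃ s : ℝ, 0 ≤ s ∧ s ^ 2 = M := ⟨√M, Real.sqrt_nonneg M, Real.sq_sqrt hM⟩
  rw [Real.sqrt_sq hs]
  refine sqrt_sub_le_of_quadratic_bound hp hs (abs_nonneg _) ?_
  rcases le_total |(∑ i ∈ range p₀, a i) + t| (2 * p₀ * s) with hR | hR
  · have hu : 2 * s ≤ |a 0 + t| :=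
      le_of_abs_le (sq_le_sq.1 (by linarith [four_mul_le_sq_add (a 0) t]))
    have hN := two_mul_sum_mul_tail_le a p₀ t
    rw [hconstr, hM'] at hN
    exact quadratic_bound_of_abs_le hp.le hR hu hN
  · exact quadratic_bound_of_le_abs hp.le hs hR hNM

/-- **Second simplification of Problem 3.3 with real variables, case
`N ≤ ((p₀-1)² + p₀²)·M`, `p₀ ≥ 3`.**  For an integer `p₀ ≥ 3` and reals `M > 0`,
`N ≤ ((p₀-1)² + p₀²)·M`, every positive real tuple `(a 0, …, a (p₀-1), t)` satisfying
`∑_{i=0}^{p₀-1} a i · r (i+1) = N` and `a 0 · t = M`, where `r i = a i + … + a (p₀-1) + t`,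
satisfies
`r₀ = a 0 + … + a (p₀-1) + t ≥ √((2(p₀-1)/(p₀-2))·N + (2p₀(p₀-1)/(p₀-2)²)·M) - (2/(p₀-2))·√M`. -/
theorem second_simplification_case2
    (p₀ : ℕ) (hp₀ : 3 ≤ p₀) (N M : ℝ) (hM : 0 < M)
    (hNM : N ≤ (((p₀ : ℝ) - 1) ^ 2 + (p₀ : ℝ) ^ 2) * M)
    (a : ℕ → ℝ) (t : ℝ) (ha : ∀ i < p₀, 0 < a i) (ht : 0 < t)
    (hconstr : (∑ i ∈ Finset.range p₀, a i * ((∑ j ∈ Finset.Ico (i + 1) p₀, a j) + t)) = N)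
    (hM' : a 0 * t = M) :
    Real.sqrt ((2 * ((p₀ : ℝ) - 1) / ((p₀ : ℝ) - 2)) * N +
          (2 * (p₀ : ℝ) * ((p₀ : ℝ) - 1) / ((p₀ : ℝ) - 2) ^ 2) * M) -
        (2 / ((p₀ : ℝ) - 2)) * Real.sqrt M ≤
      (∑ i ∈ Finset.range p₀, a i) + t := by
  have hr : 0 ≤ (∑ i ∈ range p₀, a i) + t :=
    add_nonneg (sum_nonneg fun i hi => (ha i (mem_range.1 hi)).le) ht.le
  exact (second_simplification_case2_general p₀ hp₀ N M hM.le hNM a t hconstr hM').trans_eq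
    (abs_of_nonneg hr)
end
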